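/- For each κ ∈ (0,1/2) there is a constant C < ∞ such that for all bounded continuous S₁, S₂: ℝ → ℝ with ‖S₁‖_{C^{1/2−κ/2}} < ∞ and ‖S₂‖_{C^{1/2−κ/2}} < ∞, every bounded continuous v: ℝ → ℝ with ‖v‖_{C^{1/2+κ}} < ∞, and every x ∈ ℝ, one has ∫_ℝ |e^{S₁(y)−S₁(x)} − e^{S₂(y)−S₂(x)}| · |v(y) − v(x)| / (y−x)² dy ≤ C ‖v‖_{C^{1/2+κ}} ‖S₁ − S₂‖_{C^{1/2−κ/2}} exp(2 sup|S₁| + 2 sup|S₂|). -/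

import Mathlib

/-!
Both exponents lie below `M = 2 sup |S₁| + 2 sup |S₂|`, where `exp` is `e ^ M`-Lipschitz, so
`|e^(S₁(y)-S₁(x)) - e^(S₂(y)-S₂(x))| ≤ e ^ M |D(y) - D(x)|` with `D = S₁ - S₂`. What is left is
the integral of a product of increments of a `C^α` and a `C^β` function against `(y - x)⁻²`. Near
`x` the integrand is of order `|y - x| ^ (α + β - 2)`, integrable exactly because `α + β > 1` (here
`α + β = 1 + κ / 2`); away from `x` it is of order `|y - x|⁻²` since both functions are bounded.
-/

open MeasureTheory

/-- The set whose supremum is the Hölder seminorm of `g` with exponent `γ`: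
values `|g(x) - g(y)| / |x-y|^γ` over `x ≠ y` with `|x-y| ≤ 1`. -/
noncomputable def holderSet (γ : ℝ) (g : ℝ → ℝ) : Set ℝ :=
  {r | ∃ x y : ℝ, x ≠ y ∧ |x - y| ≤ 1 ∧ r = |g x - g y| / |x - y| ^ γ}

/-- The Hölder norm `‖g‖_{C^γ} = sup |g| + sup_{0<|x-y|≤1} |g(x)-g(y)|/|x-y|^γ`. -/
noncomputable def holderNorm (γ : ℝ) (g : ℝ → ℝ) : ℝ :=
  sSup (Set.range fun x => |g x|) + sSup (holderSet γ g)

/-- Finiteness of the Hölder norm `‖g‖_{C^γ}`: `g` is bounded and its Hölder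
seminorm quotient set is bounded above. -/
def HolderFinite (γ : ℝ) (g : ℝ → ℝ) : Prop :=
  BddAbove (Set.range fun x => |g x|) ∧ BddAbove (holderSet γ g)

section SupNorm

variable {g : ℝ → ℝ}

theorem sSup_range_abs_nonneg (g : ℝ → ℝ) : 0 ≤ sSup (Set.range fun x => |g x|) :=
  Real.iSup_nonneg fun x => abs_nonneg (g x)

theorem abs_sub_le_two_mul_sSup_range_abs (hg : BddAbove (Set.range fun x => |g x|)) (x y : ℝ) :
    |g y - g x| ≤ 2 * sSup (Set.range fun x => |g x|) :=
  calc |g y - g x| ≤ |g y| + |g x| := abs_sub _ _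
    _ ≤ sSup (Set.range fun x => |g x|) + sSup (Set.range fun x => |g x|) :=
      add_le_add (le_csSup hg ⟨y, rfl⟩) (le_csSup hg ⟨x, rfl⟩)
    _ = 2 * sSup (Set.range fun x => |g x|) := (two_mul _).symm

end SupNorm

section HolderNorm

variable {γ : ℝ} {f g : ℝ → ℝ}

theorem sSup_holderSet_nonneg (γ : ℝ) (g : ℝ → ℝ) : 0 ≤ sSup (holderSet γ g) := by
  apply Real.sSup_nonneg
  rintro _ ⟨x, y, -, -, rfl⟩
  positivity

theorem holderNorm_nonneg (γ : ℝ) (g : ℝ → ℝ) : 0 ≤ holderNorm γ g :=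
  add_nonneg (sSup_range_abs_nonneg g) (sSup_holderSet_nonneg γ g)

theorem HolderFinite.abs_sub_le_two_mul (hg : HolderFinite γ g) (x y : ℝ) :
    |g y - g x| ≤ 2 * holderNorm γ g :=
  (abs_sub_le_two_mul_sSup_range_abs hg.1 x y).trans <|
    mul_le_mul_of_nonneg_left (le_add_of_nonneg_right (sSup_holderSet_nonneg γ g)) zero_le_two

theorem HolderFinite.abs_sub_le_mul_rpow (hg : HolderFinite γ g) {x y : ℝ} (hne : y ≠ x)
    (hle : |y - x| ≤ 1) : |g y - g x| ≤ holderNorm γ g * |y - x| ^ γ := by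
  have hpos : 0 < |y - x| := abs_sub_pos.2 hne
  rw [← div_le_iff₀ (Real.rpow_pos_of_pos hpos γ)]
  exact (le_csSup hg.2 ⟨y, x, hne, hle, rfl⟩).trans
    (le_add_of_nonneg_left (sSup_range_abs_nonneg g))

theorem HolderFinite.sub (hf : HolderFinite γ f) (hg : HolderFinite γ g) :
    HolderFinite γ fun z => f z - g z := by
  obtain ⟨⟨a, ha⟩, ⟨b, hb⟩⟩ := hf
  obtain ⟨⟨c, hc⟩, ⟨d, hd⟩⟩ := hg
  refine ⟨⟨a + c, ?_⟩, ⟨b + d, ?_⟩⟩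
  · rintro _ ⟨x, rfl⟩
    exact (abs_sub _ _).trans (add_le_add (ha ⟨x, rfl⟩) (hc ⟨x, rfl⟩))
  · rintro _ ⟨x, y, hne, hle, rfl⟩
    calc |f x - g x - (f y - g y)| / |x - y| ^ γ
        ≤ (|f x - f y| + |g x - g y|) / |x - y| ^ γ := by
          rw [sub_sub_sub_comm]
          gcongr
          exact abs_sub _ _
      _ = |f x - f y| / |x - y| ^ γ + |g x - g y| / |x - y| ^ γ := add_div _ _ _
      _ ≤ b + d := add_le_add (hb ⟨x, y, hne, hle, rfl⟩) (hd ⟨x, y, hne, hle, rfl⟩)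

end HolderNorm

section IncrementKernel

/-- Radial majorant of `|f y - f x| |g y - g x| / (y - x) ^ 2` at distance `r = |y - x|`, when `f`
and `g` have unit Hölder norms with exponents adding up to `s`. The switch at `r = 1` is where the
Hölder quotients stop being controlled, and the factor `4` comes from bounding each increment by
twice the supremum. -/
noncomputable def incrementKernel (s r : ℝ) : ℝ :=
  if r ≤ 1 then r ^ (s - 2) else 4 * r ^ (-2 : ℝ)

variable {s r : ℝ}

theorem incrementKernel_of_le_one (hr : r ≤ 1) : incrementKernel s r = r ^ (s - 2) :=
  if_pos hr

theorem incrementKernel_of_one_lt (hr : 1 < r) : incrementKernel s r = 4 * r ^ (-2 : ℝ) :=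
  if_neg hr.not_ge

theorem incrementKernel_nonneg (hr : 0 ≤ r) : 0 ≤ incrementKernel s r := by
  unfold incrementKernel
  split_ifs <;> positivity

theorem integrableOn_incrementKernel_Ioc (hs : 1 < s) :
    IntegrableOn (incrementKernel s) (Set.Ioc 0 1) := by
  have hrpow : IntegrableOn (fun r : ℝ => r ^ (s - 2)) (Set.Ioc 0 1) :=
    (intervalIntegrable_iff_integrableOn_Ioc_of_le zero_le_one).1
      (intervalIntegral.intervalIntegrable_rpow' (by linarith))
  exact hrpow.congr_fun (fun r hr => (incrementKernel_of_le_one hr.2).symm) measurableSet_Ioc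

theorem integrableOn_incrementKernel_Ioi_one (s : ℝ) :
    IntegrableOn (incrementKernel s) (Set.Ioi 1) := by
  have hrpow : IntegrableOn (fun r : ℝ => 4 * r ^ (-2 : ℝ)) (Set.Ioi 1) :=
    (integrableOn_Ioi_rpow_of_lt (by norm_num) one_pos).const_mul 4
  exact hrpow.congr_fun (fun r hr => (incrementKernel_of_one_lt hr).symm) measurableSet_Ioi

theorem integrable_incrementKernel_abs (hs : 1 < s) :
    Integrable fun t : ℝ => incrementKernel s |t| := by
  have hIoi : IntegrableOn (incrementKernel s) (Set.Ioi 0) := by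
    rw [← Set.Ioc_union_Ioi_eq_Ioi zero_le_one]
    exact (integrableOn_incrementKernel_Ioc hs).union (integrableOn_incrementKernel_Ioi_one s)
  simp only [← Real.norm_eq_abs]
  rw [integrable_fun_norm_addHaar volume]
  simpa using hIoi

theorem integral_incrementKernel_Ioc (hs : 1 < s) :
    ∫ r in Set.Ioc 0 1, incrementKernel s r = 1 / (s - 1) := by
  have hs' : s - 2 + 1 = s - 1 := by ring
  calc ∫ r in Set.Ioc 0 1, incrementKernel s r
      = ∫ r in Set.Ioc (0 : ℝ) 1, r ^ (s - 2) :=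
        setIntegral_congr_fun measurableSet_Ioc fun r hr => incrementKernel_of_le_one hr.2
    _ = 1 / (s - 1) := by
        rw [← intervalIntegral.integral_of_le zero_le_one, integral_rpow (Or.inl (by linarith)),
          hs', Real.one_rpow, Real.zero_rpow (by linarith), sub_zero]

theorem integral_incrementKernel_Ioi_one (s : ℝ) :
    ∫ r in Set.Ioi 1, incrementKernel s r = 4 := by
  calc ∫ r in Set.Ioi 1, incrementKernel s r
      = ∫ r in Set.Ioi (1 : ℝ), 4 * r ^ (-2 : ℝ) :=
        setIntegral_congr_fun measurableSet_Ioi fun r hr => incrementKernel_of_one_lt hr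
    _ = 4 := by
        rw [integral_const_mul, integral_Ioi_rpow_of_lt (by norm_num) one_pos]
        norm_num

theorem integral_incrementKernel_abs (hs : 1 < s) :
    ∫ t : ℝ, incrementKernel s |t| = 2 / (s - 1) + 8 := by
  rw [integral_comp_abs, ← Set.Ioc_union_Ioi_eq_Ioi zero_le_one,
    setIntegral_union (Set.Ioc_disjoint_Ioi le_rfl) measurableSet_Ioi
      (integrableOn_incrementKernel_Ioc hs) (integrableOn_incrementKernel_Ioi_one s),
    integral_incrementKernel_Ioc hs, integral_incrementKernel_Ioi_one]
  ring

theorem lintegral_incrementKernel_abs_sub (hs : 1 < s) (x : ℝ) :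
    ∫⁻ y : ℝ, ENNReal.ofReal (incrementKernel s |y - x|) = ENNReal.ofReal (2 / (s - 1) + 8) := by
  rw [lintegral_sub_right_eq_self (fun t : ℝ => ENNReal.ofReal (incrementKernel s |t|)),
    ← ofReal_integral_eq_lintegral_ofReal (integrable_incrementKernel_abs hs)
      (Filter.Eventually.of_forall fun t => incrementKernel_nonneg (abs_nonneg t)),
    integral_incrementKernel_abs hs]

end IncrementKernel

section HolderIncrements

variable {α β : ℝ} {f g : ℝ → ℝ}

theorem HolderFinite.abs_sub_mul_abs_sub_le (hf : HolderFinite α f) (hg : HolderFinite β g)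
    {x y : ℝ} (hne : y ≠ x) :
    |f y - f x| * |g y - g x| ≤
      holderNorm α f * holderNorm β g * (incrementKernel (α + β) |y - x| * (y - x) ^ 2) := by
  have hF := holderNorm_nonneg α f
  have hpos : 0 < |y - x| := abs_sub_pos.2 hne
  have hsq : (y - x) ^ 2 = |y - x| ^ (2 : ℝ) := by rw [Real.rpow_two, sq_abs]
  rw [hsq]
  rcases le_or_gt |y - x| 1 with hle | hlt
  · have hrpow : |y - x| ^ α * |y - x| ^ β = |y - x| ^ (α + β - 2) * |y - x| ^ (2 : ℝ) := by
      rw [← Real.rpow_add hpos, ← Real.rpow_add hpos, sub_add_cancel]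
    calc |f y - f x| * |g y - g x|
        ≤ (holderNorm α f * |y - x| ^ α) * (holderNorm β g * |y - x| ^ β) := by
          gcongr
          exacts [hf.abs_sub_le_mul_rpow hne hle, hg.abs_sub_le_mul_rpow hne hle]
      _ = holderNorm α f * holderNorm β g * (|y - x| ^ (α + β - 2) * |y - x| ^ (2 : ℝ)) := by
          rw [mul_mul_mul_comm, hrpow]
      _ = _ := by rw [incrementKernel_of_le_one hle]
  · have hrpow : |y - x| ^ (-2 : ℝ) * |y - x| ^ (2 : ℝ) = 1 := by
      rw [← Real.rpow_add hpos, neg_add_cancel, Real.rpow_zero]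
    calc |f y - f x| * |g y - g x|
        ≤ (2 * holderNorm α f) * (2 * holderNorm β g) := by
          gcongr
          exacts [hf.abs_sub_le_two_mul x y, hg.abs_sub_le_two_mul x y]
      _ = holderNorm α f * holderNorm β g * (4 * 1) := by ring
      _ = _ := by rw [incrementKernel_of_one_lt hlt, mul_assoc 4, hrpow]

theorem HolderFinite.abs_sub_mul_abs_sub_div_sq_le (hf : HolderFinite α f)
    (hg : HolderFinite β g) (x y : ℝ) :
    |f y - f x| * |g y - g x| / (y - x) ^ 2 ≤
      holderNorm α f * holderNorm β g * incrementKernel (α + β) |y - x| := by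
  rcases eq_or_ne y x with rfl | hne
  · have hK : 0 ≤ incrementKernel (α + β) |y - y| := incrementKernel_nonneg (abs_nonneg _)
    simpa using mul_nonneg (mul_nonneg (holderNorm_nonneg α f) (holderNorm_nonneg β g)) hK
  · rw [div_le_iff₀ (sq_pos_iff.2 (sub_ne_zero.2 hne)), mul_assoc]
    exact hf.abs_sub_mul_abs_sub_le hg hne

theorem HolderFinite.lintegral_abs_sub_mul_abs_sub_div_sq_le (hαβ : 1 < α + β)
    (hf : HolderFinite α f) (hg : HolderFinite β g) (x : ℝ) :
    ∫⁻ y : ℝ, ENNReal.ofReal (|f y - f x| * |g y - g x| / (y - x) ^ 2) ≤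
      ENNReal.ofReal ((2 / (α + β - 1) + 8) * holderNorm α f * holderNorm β g) := by
  have hFG : 0 ≤ holderNorm α f * holderNorm β g :=
    mul_nonneg (holderNorm_nonneg α f) (holderNorm_nonneg β g)
  calc ∫⁻ y : ℝ, ENNReal.ofReal (|f y - f x| * |g y - g x| / (y - x) ^ 2)
      ≤ ∫⁻ y : ℝ, ENNReal.ofReal (holderNorm α f * holderNorm β g) *
          ENNReal.ofReal (incrementKernel (α + β) |y - x|) := by
        gcongr with y
        rw [← ENNReal.ofReal_mul hFG]
        exact ENNReal.ofReal_le_ofReal (hf.abs_sub_mul_abs_sub_div_sq_le hg x y)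
    _ = ENNReal.ofReal (holderNorm α f * holderNorm β g) *
          ENNReal.ofReal (2 / (α + β - 1) + 8) := by
        rw [lintegral_const_mul' _ _ ENNReal.ofReal_ne_top, lintegral_incrementKernel_abs_sub hαβ]
    _ = ENNReal.ofReal ((2 / (α + β - 1) + 8) * holderNorm α f * holderNorm β g) := by
        rw [← ENNReal.ofReal_mul hFG, mul_comm, mul_assoc (2 / (α + β - 1) + 8)]

end HolderIncrements

section ExpIncrements

theorem abs_exp_sub_exp_le {a b M : ℝ} (ha : a ≤ M) (hb : b ≤ M) :
    |Real.exp a - Real.exp b| ≤ Real.exp M * |a - b| :=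
  (convex_Iic M).norm_image_sub_le_of_norm_hasDerivWithin_le
    (fun t _ => (Real.hasDerivAt_exp t).hasDerivWithinAt)
    (fun t ht => (Real.norm_of_nonneg (Real.exp_nonneg t)).trans_le (Real.exp_le_exp.2 ht)) hb ha

theorem abs_exp_sub_sub_exp_sub_le {S₁ S₂ : ℝ → ℝ}
    (h₁ : BddAbove (Set.range fun z => |S₁ z|)) (h₂ : BddAbove (Set.range fun z => |S₂ z|))
    (x y : ℝ) :
    |Real.exp (S₁ y - S₁ x) - Real.exp (S₂ y - S₂ x)| ≤
      Real.exp (2 * sSup (Set.range fun z => |S₁ z|) + 2 * sSup (Set.range fun z => |S₂ z|)) *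
        |(S₁ y - S₂ y) - (S₁ x - S₂ x)| := by
  have hpos₁ := sSup_range_abs_nonneg S₁
  have hpos₂ := sSup_range_abs_nonneg S₂
  have hle₁ := (le_abs_self _).trans (abs_sub_le_two_mul_sSup_range_abs h₁ x y)
  have hle₂ := (le_abs_self _).trans (abs_sub_le_two_mul_sSup_range_abs h₂ x y)
  rw [sub_sub_sub_comm]
  exact abs_exp_sub_exp_le (by linarith) (by linarith)

end ExpIncrements

theorem Xi_operator_stability_general {α β : ℝ} (hαβ : 1 < α + β) {S₁ S₂ v : ℝ → ℝ}
    (hS₁ : BddAbove (Set.range fun z => |S₁ z|)) (hS₂ : BddAbove (Set.range fun z => |S₂ z|))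
    (hS : HolderFinite α fun z => S₁ z - S₂ z) (hv : HolderFinite β v) (x : ℝ) :
    ∫⁻ y : ℝ, ENNReal.ofReal
        (|Real.exp (S₁ y - S₁ x) - Real.exp (S₂ y - S₂ x)| * |v y - v x| / (y - x) ^ 2)
      ≤ ENNReal.ofReal
          ((2 / (α + β - 1) + 8) * holderNorm β v * holderNorm α (fun z => S₁ z - S₂ z) *
            Real.exp (2 * sSup (Set.range fun z => |S₁ z|) +
              2 * sSup (Set.range fun z => |S₂ z|))) := by
  set E := Real.exp (2 * sSup (Set.range fun z => |S₁ z|) + 2 * sSup (Set.range fun z => |S₂ z|))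
  set D : ℝ → ℝ := fun z => S₁ z - S₂ z
  have hE : 0 ≤ E := Real.exp_nonneg _
  calc ∫⁻ y : ℝ, ENNReal.ofReal
        (|Real.exp (S₁ y - S₁ x) - Real.exp (S₂ y - S₂ x)| * |v y - v x| / (y - x) ^ 2)
      ≤ ∫⁻ y : ℝ, ENNReal.ofReal E *
          ENNReal.ofReal (|D y - D x| * |v y - v x| / (y - x) ^ 2) := by
        gcongr with y
        rw [← ENNReal.ofReal_mul hE, ← mul_div_assoc, ← mul_assoc]
        gcongr
        exact abs_exp_sub_sub_exp_sub_le hS₁ hS₂ x y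
    _ ≤ ENNReal.ofReal E *
          ENNReal.ofReal ((2 / (α + β - 1) + 8) * holderNorm α D * holderNorm β v) := by
        rw [lintegral_const_mul' _ _ ENNReal.ofReal_ne_top]
        gcongr
        exact hS.lintegral_abs_sub_mul_abs_sub_div_sq_le hαβ hv x
    _ = ENNReal.ofReal ((2 / (α + β - 1) + 8) * holderNorm β v * holderNorm α D * E) := by
        rw [← ENNReal.ofReal_mul hE, mul_comm, mul_right_comm _ (holderNorm α D)]

/-- For `κ ∈ (0,1/2)` there is `C < ∞` such that for all bounded continuous `S₁, S₂`
with finite `C^(1/2-κ/2)` norms, every bounded continuous `v` with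
`‖v‖_{C^(1/2+κ)} < ∞`, and every `x`,
`∫ |e^(S₁(y)-S₁(x)) - e^(S₂(y)-S₂(x))| |v(y)-v(x)| / (y-x)² dy
  ≤ C ‖v‖_{C^(1/2+κ)} ‖S₁-S₂‖_{C^(1/2-κ/2)} exp(2 sup|S₁| + 2 sup|S₂|)`. -/
theorem Xi_operator_stability (κ : ℝ) (hκ : κ ∈ Set.Ioo (0 : ℝ) (1 / 2)) :
    ∃ C : ℝ, ∀ S₁ S₂ v : ℝ → ℝ, Continuous S₁ → Continuous S₂ →
      HolderFinite (1 / 2 - κ / 2) S₁ → HolderFinite (1 / 2 - κ / 2) S₂ →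
      Continuous v → HolderFinite (1 / 2 + κ) v →
      ∀ x : ℝ,
        ∫⁻ y : ℝ, ENNReal.ofReal
            (|Real.exp (S₁ y - S₁ x) - Real.exp (S₂ y - S₂ x)| * |v y - v x| /
              (y - x) ^ 2)
          ≤ ENNReal.ofReal
              (C * holderNorm (1 / 2 + κ) v *
                holderNorm (1 / 2 - κ / 2) (fun z => S₁ z - S₂ z) *
                Real.exp (2 * sSup (Set.range fun z => |S₁ z|) +
                  2 * sSup (Set.range fun z => |S₂ z|))) :=
  ⟨2 / (1 / 2 - κ / 2 + (1 / 2 + κ) - 1) + 8, fun _ _ _ _ _ hS₁ hS₂ _ hv =>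
    Xi_operator_stability_general (by linarith [hκ.1]) hS₁.1 hS₂.1 (hS₁.sub hS₂) hv⟩
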